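/- Let X and Y be nonempty finite sets, let P_fwd : X × Y → ℝ be a probability distribution with P_fwd(x,y) > 0 for all (x,y), let q(y) := Σ_x P_fwd(x,y) be its Y-marginal, and let τ : Y → ℝ be a probability distribution on Y. Define P⋆(x,y) := P_fwd(x,y) τ(y) / q(y). Then P⋆ is a probability distribution on X × Y with Y-marginal τ, and for every probability distribution P on X × Y with Σ_x P(x,y) = τ(y) for all y, the Kullback–Leibler divergence satisfies D_KL(P ‖ P_fwd) ≥ D_KL(P⋆ ‖ P_fwd), with equality if and only if P = P⋆. -/

import Mathlib

/-!
For nonnegative weights `P` and `w` on a finite set, with `P` zero where `w` is, and a map `f`, the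
divergence obeys the chain rule `D(P ‖ w) = D(P ‖ P⋆) + D(f₊P ‖ f₊w)`, where `f₊` sums over the
fibres of `f`, and `P⋆` rescales `w` on each fibre so that `f₊P⋆ = f₊P`. The second term depends on
`P` only through `τ = f₊P` and equals `D(P⋆ ‖ w)`, so Gibbs' inequality for the first term shows
that `P⋆` is the unique minimizer with `f₊P = τ`.
-/

open InformationTheory

section KLDivergence

variable {ι : Type*} [Fintype ι] {p r : ι → ℝ}

/-- The Kullback–Leibler divergence of two weights on a finite type, which need not be normalized.
Since `x / 0 = 0` and `Real.log 0 = 0`, it is meaningful only if `p` vanishes where `r` does. -/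
noncomputable def klDivergence (p r : ι → ℝ) : ℝ :=
  ∑ i, p i * Real.log (p i / r i)

theorem klDivergence_eq_sum_mul_klFun (hpr : ∀ i, r i = 0 → p i = 0)
    (hsum : ∑ i, p i = ∑ i, r i) :
    klDivergence p r = ∑ i, r i * klFun (p i / r i) := by
  have pointwise (i : ι) :
      r i * klFun (p i / r i) = p i * Real.log (p i / r i) + (r i - p i) := by
    by_cases hr : r i = 0
    · simp [hr, hpr i hr]
    · rw [klFun_apply]
      field_simp
      ring
  simp only [pointwise, Finset.sum_add_distrib, Finset.sum_sub_distrib, hsum, sub_self, add_zero,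
    klDivergence]

theorem klDivergence_nonneg (hp : ∀ i, 0 ≤ p i) (hr : ∀ i, 0 ≤ r i)
    (hpr : ∀ i, r i = 0 → p i = 0) (hsum : ∑ i, p i = ∑ i, r i) :
    0 ≤ klDivergence p r := by
  rw [klDivergence_eq_sum_mul_klFun hpr hsum]
  exact Finset.sum_nonneg fun i _ => mul_nonneg (hr i) (klFun_nonneg (div_nonneg (hp i) (hr i)))

theorem klDivergence_eq_zero_iff (hp : ∀ i, 0 ≤ p i) (hr : ∀ i, 0 ≤ r i)
    (hpr : ∀ i, r i = 0 → p i = 0) (hsum : ∑ i, p i = ∑ i, r i) :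
    klDivergence p r = 0 ↔ p = r := by
  have ratio_nonneg (i : ι) : 0 ≤ p i / r i := div_nonneg (hp i) (hr i)
  have term_eq_zero_iff (i : ι) : r i * klFun (p i / r i) = 0 ↔ p i = r i := by
    by_cases hi : r i = 0
    · simp [hi, hpr i hi]
    · rw [mul_eq_zero_iff_left hi, klFun_eq_zero_iff (ratio_nonneg i), div_eq_one_iff_eq hi]
  rw [klDivergence_eq_sum_mul_klFun hpr hsum, Finset.sum_eq_zero_iff_of_nonneg
    fun i _ => mul_nonneg (hr i) (klFun_nonneg (ratio_nonneg i))]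
  simp only [Finset.mem_univ, true_imp_iff, term_eq_zero_iff, funext_iff]

end KLDivergence

section Pushforward

variable {α β : Type*} [Fintype α] [DecidableEq β] {f : α → β} {w P : α → ℝ}

/-- The image of a weight under `f`, obtained by summing over the fibres of `f`; for
`f = Prod.snd` this is the second marginal. -/
def pushforward (f : α → β) (w : α → ℝ) (y : β) : ℝ :=
  ∑ a with f a = y, w a

theorem pushforward_snd {X Y : Type*} [Fintype X] [Fintype Y] [DecidableEq Y] (w : X × Y → ℝ)
    (y : Y) : pushforward Prod.snd w y = ∑ x, w (x, y) := by
  simp [pushforward, Finset.sum_filter, Fintype.sum_prod_type]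

theorem sum_mul_comp_eq_sum_pushforward_mul [Fintype β] (f : α → β) (w : α → ℝ) (g : β → ℝ) :
    ∑ a, w a * g (f a) = ∑ y, pushforward f w y * g y := by
  simp only [pushforward, Finset.sum_mul]
  rw [← Finset.sum_fiberwise Finset.univ f]
  refine Finset.sum_congr rfl fun y _ => Finset.sum_congr rfl fun a ha => ?_
  rw [(Finset.mem_filter.1 ha).2]

theorem sum_pushforward [Fintype β] (f : α → β) (w : α → ℝ) :
    ∑ y, pushforward f w y = ∑ a, w a :=
  Finset.sum_fiberwise Finset.univ f w

theorem pushforward_pos (hf : f.Surjective) (hw : ∀ a, 0 < w a) (y : β) :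
    0 < pushforward f w y := by
  obtain ⟨a, rfl⟩ := hf y
  exact Finset.sum_pos (fun b _ => hw b) ⟨a, by simp⟩

theorem pushforward_nonneg (hw : ∀ a, 0 ≤ w a) (y : β) : 0 ≤ pushforward f w y :=
  Finset.sum_nonneg fun a _ => hw a

theorem eq_zero_of_pushforward_eq_zero (hw : ∀ a, 0 ≤ w a) {a : α}
    (h : pushforward f w (f a) = 0) : w a = 0 :=
  (Finset.sum_eq_zero_iff_of_nonneg fun b _ => hw b).1 h a (by simp)

theorem pushforward_eq_zero_of_pushforward_eq_zero (hw : ∀ a, 0 ≤ w a)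
    (hPw : ∀ a, w a = 0 → P a = 0) {y : β} (h : pushforward f w y = 0) :
    pushforward f P y = 0 := by
  refine Finset.sum_eq_zero fun a ha => hPw a (eq_zero_of_pushforward_eq_zero (f := f) hw ?_)
  rwa [(Finset.mem_filter.1 ha).2]

end Pushforward

section Reweight

variable {α β : Type*} [Fintype α] [DecidableEq β] {f : α → β} {w P : α → ℝ} {τ : β → ℝ}

/-- The weight proportional to `w` on each fibre of `f` whose image under `f` is `τ`; for
`f = Prod.snd` this is the distribution `P⋆` obtained from `w = P_fwd`. On fibres where `w` has
total mass zero it is zero, by the convention `x / 0 = 0`. -/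
noncomputable def reweight (f : α → β) (w : α → ℝ) (τ : β → ℝ) (a : α) : ℝ :=
  w a * τ (f a) / pushforward f w (f a)

theorem reweight_nonneg (hw : ∀ a, 0 ≤ w a) (hτ : ∀ y, 0 ≤ τ y) (a : α) :
    0 ≤ reweight f w τ a :=
  div_nonneg (mul_nonneg (hw a) (hτ _)) (pushforward_nonneg hw _)

theorem reweight_eq_zero {a : α} (ha : w a = 0) : reweight f w τ a = 0 := by
  simp [reweight, ha]

theorem pushforward_reweight (hτw : ∀ y, pushforward f w y = 0 → τ y = 0) :
    pushforward f (reweight f w τ) = τ := by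
  funext y
  calc pushforward f (reweight f w τ) y
      = ∑ a with f a = y, w a * τ y / pushforward f w y :=
        Finset.sum_congr rfl fun a ha => by rw [reweight, (Finset.mem_filter.1 ha).2]
    _ = pushforward f w y * τ y / pushforward f w y := by
        rw [← Finset.sum_div, ← Finset.sum_mul, pushforward]
    _ = τ y := mul_div_cancel_left_of_imp (hτw y)

theorem sum_reweight [Fintype β] (hτw : ∀ y, pushforward f w y = 0 → τ y = 0) :
    ∑ a, reweight f w τ a = ∑ y, τ y := by
  rw [← sum_pushforward f, pushforward_reweight hτw]

theorem eq_zero_of_reweight_pushforward_eq_zero (hw : ∀ a, 0 ≤ w a) (hP : ∀ a, 0 ≤ P a)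
    (hPw : ∀ a, w a = 0 → P a = 0) {a : α} (h : reweight f w (pushforward f P) a = 0) :
    P a = 0 := by
  rw [reweight, div_eq_zero_iff, mul_eq_zero] at h
  obtain (hwa | hPa) | hwf := h
  · exact hPw a hwa
  · exact eq_zero_of_pushforward_eq_zero hP hPa
  · exact hPw a (eq_zero_of_pushforward_eq_zero hw hwf)

theorem klDivergence_reweight_left [Fintype β] (hτw : ∀ y, pushforward f w y = 0 → τ y = 0) :
    klDivergence (reweight f w τ) w = klDivergence τ (pushforward f w) := by
  have log_ratio (a : α) : reweight f w τ a * Real.log (reweight f w τ a / w a) =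
      reweight f w τ a * Real.log (τ (f a) / pushforward f w (f a)) := by
    by_cases ha : w a = 0
    · simp [reweight_eq_zero ha]
    · have ratio : reweight f w τ a / w a = τ (f a) / pushforward f w (f a) := by
        rw [reweight, mul_div_assoc, mul_div_cancel_left₀ _ ha]
      rw [ratio]
  calc klDivergence (reweight f w τ) w
      = ∑ a, reweight f w τ a * Real.log (τ (f a) / pushforward f w (f a)) :=
        Finset.sum_congr rfl fun a _ => log_ratio a
    _ = ∑ y, pushforward f (reweight f w τ) y * Real.log (τ y / pushforward f w y) :=
        sum_mul_comp_eq_sum_pushforward_mul f _ fun y => Real.log (τ y / pushforward f w y)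
    _ = klDivergence τ (pushforward f w) := by rw [pushforward_reweight hτw, klDivergence]

theorem klDivergence_eq_add_klDivergence_pushforward [Fintype β] (f : α → β)
    (hw : ∀ a, 0 ≤ w a) (hP : ∀ a, 0 ≤ P a) (hPw : ∀ a, w a = 0 → P a = 0) :
    klDivergence P w = klDivergence P (reweight f w (pushforward f P)) +
      klDivergence (pushforward f P) (pushforward f w) := by
  have log_ratio (a : α) : P a * Real.log (P a / w a) =
      P a * Real.log (P a / reweight f w (pushforward f P) a) +
        P a * Real.log (pushforward f P (f a) / pushforward f w (f a)) := by
    by_cases hPa : P a = 0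
    · simp [hPa]
    · have hwa : w a ≠ 0 := mt (hPw a) hPa
      have hPf : pushforward f P (f a) ≠ 0 := mt (eq_zero_of_pushforward_eq_zero hP) hPa
      have hwf : pushforward f w (f a) ≠ 0 := mt (eq_zero_of_pushforward_eq_zero hw) hwa
      have hR : reweight f w (pushforward f P) a ≠ 0 :=
        mt (eq_zero_of_reweight_pushforward_eq_zero hw hP hPw) hPa
      have ratio : P a / w a = P a / reweight f w (pushforward f P) a *
          (pushforward f P (f a) / pushforward f w (f a)) := by
        rw [reweight]
        field_simp
      rw [ratio, Real.log_mul (div_ne_zero hPa hR) (div_ne_zero hPf hwf), mul_add]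
  rw [klDivergence, Finset.sum_congr rfl fun a _ => log_ratio a, Finset.sum_add_distrib,
    sum_mul_comp_eq_sum_pushforward_mul f P fun y =>
      Real.log (pushforward f P y / pushforward f w y)]
  rfl

theorem klDivergence_pythagorean [Finite β] (f : α → β)
    (hw : ∀ a, 0 ≤ w a) (hP : ∀ a, 0 ≤ P a) (hPw : ∀ a, w a = 0 → P a = 0) :
    klDivergence P w = klDivergence P (reweight f w (pushforward f P)) +
      klDivergence (reweight f w (pushforward f P)) w := by
  cases nonempty_fintype β
  rw [klDivergence_reweight_left fun _ => pushforward_eq_zero_of_pushforward_eq_zero hw hPw]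
  exact klDivergence_eq_add_klDivergence_pushforward f hw hP hPw

end Reweight

theorem stmt18_general {α β : Type*} [Fintype α] [Fintype β] [DecidableEq β] (f : α → β)
    {w : α → ℝ} (hw : ∀ a, 0 ≤ w a) {τ : β → ℝ} (hτ : ∀ y, 0 ≤ τ y)
    (hτw : ∀ y, pushforward f w y = 0 → τ y = 0) :
    (∀ a, 0 ≤ reweight f w τ a) ∧ (∀ a, w a = 0 → reweight f w τ a = 0) ∧
      (∑ a, reweight f w τ a = ∑ y, τ y) ∧ pushforward f (reweight f w τ) = τ ∧
      ∀ P : α → ℝ, (∀ a, 0 ≤ P a) → (∀ a, w a = 0 → P a = 0) → pushforward f P = τ →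
        klDivergence (reweight f w τ) w ≤ klDivergence P w ∧
          (klDivergence P w = klDivergence (reweight f w τ) w ↔ P = reweight f w τ) := by
  refine ⟨reweight_nonneg hw hτ, fun _ => reweight_eq_zero, sum_reweight hτw,
    pushforward_reweight hτw, ?_⟩
  rintro P hP hPw rfl
  have star_nonneg := reweight_nonneg (f := f) hw hτ
  have vanish (a : α) := eq_zero_of_reweight_pushforward_eq_zero (f := f) (a := a) hw hP hPw
  have sum_eq : ∑ a, P a = ∑ a, reweight f w (pushforward f P) a := by
    rw [sum_reweight hτw, sum_pushforward]
  rw [klDivergence_pythagorean f hw hP hPw, add_eq_right]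
  exact ⟨le_add_of_nonneg_left (klDivergence_nonneg hP star_nonneg vanish sum_eq),
    klDivergence_eq_zero_iff hP star_nonneg vanish sum_eq⟩

/-- the classical minimum change principle for the Kullback–Leibler divergence:
the distribution `P⋆(x,y) = P_fwd(x,y) τ(y) / q(y)` is a probability distribution on `X × Y`
with `Y`-marginal `τ`, and it is the unique minimizer of `D_KL(P ‖ P_fwd)` among probability
distributions `P` on `X × Y` with `Y`-marginal `τ`. -/
theorem stmt18 {X Y : Type*} [Fintype X] [Nonempty X] [Fintype Y] [Nonempty Y]
    (Pfwd : X × Y → ℝ) (hpos : ∀ p, 0 < Pfwd p) (hsum : ∑ p, Pfwd p = 1)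
    (q : Y → ℝ) (hq : q = fun y => ∑ x, Pfwd (x, y))
    (τ : Y → ℝ) (hτ : ∀ y, 0 ≤ τ y) (hτsum : ∑ y, τ y = 1)
    (Pstar : X × Y → ℝ) (hPstar : Pstar = fun p => Pfwd p * τ p.2 / q p.2) :
    (∀ p, 0 ≤ Pstar p) ∧ (∑ p, Pstar p = 1) ∧ (∀ y, ∑ x, Pstar (x, y) = τ y) ∧
      ∀ P : X × Y → ℝ, (∀ p, 0 ≤ P p) → (∑ p, P p = 1) → (∀ y, ∑ x, P (x, y) = τ y) →
        (∑ p, Pstar p * Real.log (Pstar p / Pfwd p)) ≤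
            (∑ p, P p * Real.log (P p / Pfwd p)) ∧
          ((∑ p, P p * Real.log (P p / Pfwd p)) =
              (∑ p, Pstar p * Real.log (Pstar p / Pfwd p)) ↔ P = Pstar) := by
  classical
  simp only [← pushforward_snd] at hq ⊢
  subst hq hPstar
  obtain ⟨hnonneg, -, hsum_star, hmarginal, hmin⟩ := stmt18_general Prod.snd (fun p => (hpos p).le)
    hτ fun y hy => absurd hy (pushforward_pos Prod.snd_surjective hpos y).ne'
  exact ⟨hnonneg, hsum_star.trans hτsum, congrFun hmarginal, fun P hP _ hPτ =>
    hmin P hP (fun p hp => absurd hp (hpos p).ne') (funext hPτ)⟩
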